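/- Let α ∈ ℝ, let c : ℝ → ℂ and φ, ψ : ℝ → ℂ^d be real analytic, 1-periodic, with ‖φ(x)‖ = ‖ψ(x)‖ = 1 for all x, and suppose c is not identically zero. Define the rank-at-most-one cocycle A(x) = c(x) φ(x) ψ(x)* ∈ ℂ^{d×d}. Then the top Lyapunov exponent satisfies L₁(α,A) = lim_{n→∞} (1/n) ∫₀¹ ln‖A_n(x)‖ dx = ∫₀¹ ln|c(x)| dx + ∫₀¹ ln|ψ(x+α)* φ(x)| dx, as an identity in [−∞,∞). In particular, if L₁(α,A) = −∞ and ∫₀¹ ln|c(x)| dx > −∞, then ∫₀¹ ln|ψ(x+α)* φ(x)| dx = −∞. -/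

import Mathlib

open MeasureTheory Filter Topology

/-- Iterates of the one-frequency cocycle: `A_n(x) = A(x+(n-1)α) ⋯ A(x+α) A(x)`. -/
noncomputable def matIter {d : ℕ} (α : ℝ) (A : ℝ → Matrix (Fin d) (Fin d) ℂ) :
    ℕ → ℝ → Matrix (Fin d) (Fin d) ℂ
  | 0, _ => 1
  | n + 1, x => matIter α A n (x + α) * A x

/-- The `k`-th largest singular value of a matrix, `1 ≤ k ≤ d`, via the
Courant–Fischer max–min characterization:
`σ_k(M) = max {t | ∃ V of dim k, ∀ v ∈ V, t‖v‖ ≤ ‖Mv‖}`. -/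
noncomputable def singVal {d : ℕ} (k : ℕ) (M : Matrix (Fin d) (Fin d) ℂ) : ℝ :=
  sSup {t : ℝ | ∃ V : Submodule ℂ (EuclideanSpace ℂ (Fin d)),
    Module.finrank ℂ V = k ∧ ∀ v ∈ V, t * ‖v‖ ≤ ‖(Matrix.toEuclideanLin M) v‖}

/-- The integral `∫ ln(g) dμ`, valued in `[-∞,∞]` (here `ln 0 = -∞`); by convention it is `-∞`
whenever the negative part of `ln g` is not `μ`-integrable. -/
noncomputable def elogIntegral {X : Type*} [MeasurableSpace X] (μ : Measure X) (g : X → ℝ) :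
    EReal :=
  if μ {x | g x = 0} = 0 ∧ (∫⁻ x, ENNReal.ofReal (-Real.log (g x)) ∂μ) ≠ ⊤ then
    (∫⁻ x, ENNReal.ofReal (Real.log (g x)) ∂μ).toEReal
      - (∫⁻ x, ENNReal.ofReal (-Real.log (g x)) ∂μ).toEReal
  else ⊥

/-- `L_k(α, A) = L`: the `k`-th Lyapunov exponent of the one-frequency cocycle `(α, A)`
is `L ∈ [-∞,∞)`, i.e. `L = lim_n (1/n) ∫₀¹ ln σ_k(A_n(x)) dx`. -/
def HasLyapunovExp {d : ℕ} (α : ℝ) (A : ℝ → Matrix (Fin d) (Fin d) ℂ) (k : ℕ) (L : EReal) :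
    Prop :=
  Tendsto (fun n : ℕ => (((n : ℝ)⁻¹ : ℝ) : EReal)
      * elogIntegral (volume.restrict (Set.Ioc (0:ℝ) 1))
          (fun x => singVal k (matIter α A n x)))
    atTop (𝓝 L)

/-- A real analytic, 1-periodic matrix valued map. -/
def AnalyticPeriodicMat {d e : ℕ} (A : ℝ → Matrix (Fin d) (Fin e) ℂ) : Prop :=
  Function.Periodic A 1 ∧ ∀ (x : ℝ) (i : Fin d) (j : Fin e), AnalyticAt ℝ (fun t => A t i j) x

/-!
The product of rank-one matrices telescopes: with `h(x) = ψ(x+α)* φ(x)`,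
`A_{n+1}(x) = (∏_{k ≤ n} c(x+kα)) (∏_{k < n} h(x+kα)) φ(x+nα) ψ(x)*`,
whose norm is the modulus of the scalar prefactor because `φ` and `ψ` are unit vectors. As
`log⁺|c|` is integrable and `|h| ≤ 1`, the integral of `ln` turns this product into a sum in
`[-∞,∞)`, and each factor contributes the same amount because translations preserve Lebesgue
measure on a period. Hence `∫ ln‖A_{n+1}‖ = (n+1) ∫ ln|c| + n ∫ ln|h|`; divide by `n + 1`.
-/

section ElogIntegral

open Real

variable {X : Type*} [MeasurableSpace X] {μ : Measure X} {f g : X → ℝ}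

lemma elogIntegral_eq_integral (hf : ∀ᵐ x ∂μ, f x ≠ 0)
    (hlog : Integrable (fun x => log (f x)) μ) :
    elogIntegral μ f = ((∫ x, log (f x) ∂μ : ℝ) : EReal) := by
  have hpos : ∫⁻ x, ENNReal.ofReal (log (f x)) ∂μ ≠ ⊤ := hlog.lintegral_lt_top.ne
  have hneg : ∫⁻ x, ENNReal.ofReal (-log (f x)) ∂μ ≠ ⊤ := hlog.neg.lintegral_lt_top.ne
  have hzero : μ {x | f x = 0} = 0 := by simpa [ae_iff] using hf
  rw [elogIntegral, if_pos ⟨hzero, hneg⟩,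
    integral_eq_lintegral_pos_part_sub_lintegral_neg_part hlog, EReal.coe_sub,
    EReal.coe_ennreal_toReal hpos, EReal.coe_ennreal_toReal hneg]

lemma elogIntegral_ne_bot_iff (hf : AEMeasurable f μ)
    (hpos : Integrable (fun x => log⁺ (f x)) μ) :
    elogIntegral μ f ≠ ⊥ ↔ (∀ᵐ x ∂μ, f x ≠ 0) ∧ Integrable (fun x => log (f x)) μ := by
  refine ⟨fun h => ?_, fun ⟨hne, hlog⟩ => ?_⟩
  · obtain ⟨hzero, hneg⟩ : μ {x | f x = 0} = 0 ∧
        ∫⁻ x, ENNReal.ofReal (-log (f x)) ∂μ ≠ ⊤ := by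
      by_contra hcond
      exact h (if_neg hcond)
    have hinv : Integrable (fun x => log⁺ (f x)⁻¹) μ := by
      refine ⟨continuous_posLog.comp_aestronglyMeasurable hf.inv.aestronglyMeasurable, ?_⟩
      rw [hasFiniteIntegral_iff_ofReal (ae_of_all _ fun _ => posLog_nonneg)]
      simpa [posLog_apply, ENNReal.ofReal_max, lt_top_iff_ne_top] using hneg
    exact ⟨by simpa [ae_iff] using hzero,
      (hpos.sub hinv).congr (ae_of_all _ fun _ => posLog_sub_posLog_inv)⟩
  · simp [elogIntegral_eq_integral hne hlog]

lemma elogIntegral_ne_top (hf : AEMeasurable f μ) (hpos : Integrable (fun x => log⁺ (f x)) μ) :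
    elogIntegral μ f ≠ ⊤ := by
  by_cases h : elogIntegral μ f = ⊥
  · simp [h]
  · obtain ⟨hne, hlog⟩ := (elogIntegral_ne_bot_iff hf hpos).1 h
    simp [elogIntegral_eq_integral hne hlog]

lemma integrable_posLog_mul (hf : AEMeasurable f μ) (hg : AEMeasurable g μ)
    (hfpos : Integrable (fun x => log⁺ (f x)) μ) (hgpos : Integrable (fun x => log⁺ (g x)) μ) :
    Integrable (fun x => log⁺ (f x * g x)) μ := by
  refine (hfpos.add hgpos).mono'
    (continuous_posLog.comp_aestronglyMeasurable (hf.mul hg).aestronglyMeasurable)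
    (ae_of_all _ fun x => ?_)
  rw [norm_of_nonneg posLog_nonneg]
  exact posLog_mul

lemma elogIntegral_mul_eq_bot (hf : AEMeasurable f μ) (hg : AEMeasurable g μ)
    (hfpos : Integrable (fun x => log⁺ (f x)) μ) (hgpos : Integrable (fun x => log⁺ (g x)) μ)
    (hbot : elogIntegral μ f = ⊥) : elogIntegral μ (fun x => f x * g x) = ⊥ := by
  contrapose! hbot
  obtain ⟨hne, hlog⟩ := (elogIntegral_ne_bot_iff (hf.mul hg)
    (integrable_posLog_mul hf hg hfpos hgpos)).1 hbot
  refine (elogIntegral_ne_bot_iff hf hfpos).2 ⟨hne.mono fun x => left_ne_zero_of_mul, ?_⟩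
  refine ((hlog.abs.add hfpos).add hgpos).mono'
    (measurable_log.comp_aemeasurable hf).aestronglyMeasurable (hne.mono fun x hx => ?_)
  have hsum : log (f x * g x) = log (f x) + log (g x) :=
    log_mul (left_ne_zero_of_mul hx) (right_ne_zero_of_mul hx)
  have hf_le : log (f x) ≤ log⁺ (f x) := le_max_right _ _
  have hg_le : log (g x) ≤ log⁺ (g x) := le_max_right _ _
  have hf_nonneg : 0 ≤ log⁺ (f x) := posLog_nonneg
  have hg_nonneg : 0 ≤ log⁺ (g x) := posLog_nonneg
  simp only [Pi.add_apply, Pi.mul_apply, norm_eq_abs]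
  exact abs_le.2 ⟨by linarith [neg_abs_le (log (f x * g x))],
    by linarith [abs_nonneg (log (f x * g x))]⟩

theorem elogIntegral_mul (hf : AEMeasurable f μ) (hg : AEMeasurable g μ)
    (hfpos : Integrable (fun x => log⁺ (f x)) μ) (hgpos : Integrable (fun x => log⁺ (g x)) μ) :
    elogIntegral μ (fun x => f x * g x) = elogIntegral μ f + elogIntegral μ g := by
  by_cases hfbot : elogIntegral μ f = ⊥
  · rw [elogIntegral_mul_eq_bot hf hg hfpos hgpos hfbot, hfbot, EReal.bot_add]
  by_cases hgbot : elogIntegral μ g = ⊥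
  · simp_rw [mul_comm (f _)]
    rw [elogIntegral_mul_eq_bot hg hf hgpos hfpos hgbot, hgbot, EReal.add_bot]
  obtain ⟨hfne, hflog⟩ := (elogIntegral_ne_bot_iff hf hfpos).1 hfbot
  obtain ⟨hgne, hglog⟩ := (elogIntegral_ne_bot_iff hg hgpos).1 hgbot
  have hlog : ∀ᵐ x ∂μ, log (f x) + log (g x) = log (f x * g x) := by
    filter_upwards [hfne, hgne] with x hfx hgx using (log_mul hfx hgx).symm
  have hne : ∀ᵐ x ∂μ, f x * g x ≠ 0 := by
    filter_upwards [hfne, hgne] with x hfx hgx using mul_ne_zero hfx hgx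
  rw [elogIntegral_eq_integral hne ((hflog.add hglog).congr hlog),
    elogIntegral_eq_integral hfne hflog, elogIntegral_eq_integral hgne hglog,
    ← integral_congr_ae hlog, integral_add hflog hglog, EReal.coe_add]

lemma integrable_posLog_prod {ι : Type*} (s : Finset ι) {f : ι → X → ℝ}
    (hf : ∀ i ∈ s, AEMeasurable (f i) μ)
    (hpos : ∀ i ∈ s, Integrable (fun x => log⁺ (f i x)) μ) :
    Integrable (fun x => log⁺ (∏ i ∈ s, f i x)) μ := by
  refine (integrable_finsetSum s hpos).mono'
    (continuous_posLog.comp_aestronglyMeasurable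
      (s.aemeasurable_fun_prod hf).aestronglyMeasurable)
    (ae_of_all _ fun x => ?_)
  rw [norm_of_nonneg posLog_nonneg]
  exact posLog_prod s fun i => f i x

theorem elogIntegral_prod {ι : Type*} (s : Finset ι) {f : ι → X → ℝ}
    (hf : ∀ i ∈ s, AEMeasurable (f i) μ)
    (hpos : ∀ i ∈ s, Integrable (fun x => log⁺ (f i x)) μ) :
    elogIntegral μ (fun x => ∏ i ∈ s, f i x) = ∑ i ∈ s, elogIntegral μ (f i) := by
  induction s using Finset.cons_induction with
  | empty => simp [elogIntegral]
  | cons i s hi ih =>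
    rw [Finset.forall_mem_cons] at hf hpos
    simp only [Finset.prod_cons, Finset.sum_cons]
    rw [elogIntegral_mul hf.1 (s.aemeasurable_fun_prod hf.2) hpos.1
      (integrable_posLog_prod s hf.2 hpos.2), ih hf.2 hpos.2]

lemma elogIntegral_eq_of_identDistrib {Y : Type*} [MeasurableSpace Y] {ν : Measure Y}
    {f' : Y → ℝ} (h : ProbabilityTheory.IdentDistrib f f' μ ν) :
    elogIntegral μ f = elogIntegral ν f' := by
  have hzero : μ {x | f x = 0} = ν {y | f' y = 0} := h.measure_mem_eq (measurableSet_singleton 0)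
  have hpos : ∫⁻ x, ENNReal.ofReal (log (f x)) ∂μ = ∫⁻ y, ENNReal.ofReal (log (f' y)) ∂ν :=
    (h.comp (u := fun t => ENNReal.ofReal (log t)) (by fun_prop)).lintegral_eq
  have hneg : ∫⁻ x, ENNReal.ofReal (-log (f x)) ∂μ = ∫⁻ y, ENNReal.ofReal (-log (f' y)) ∂ν :=
    (h.comp (u := fun t => ENNReal.ofReal (-log t)) (by fun_prop)).lintegral_eq
  simp only [elogIntegral, hzero, hpos, hneg]

end ElogIntegral

section Periodic

open Real

variable {T : ℝ}

lemma setLIntegral_Ioc_comp_add_right_of_periodic (hT : 0 < T) {F : ℝ → ENNReal}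
    (hF : Function.Periodic F T) (a y : ℝ) :
    ∫⁻ x in Set.Ioc a (a + T), F (x + y) = ∫⁻ x in Set.Ioc a (a + T), F x := by
  have htranslate : ∫⁻ x in Set.Ioc a (a + T), F (x + y)
      = ∫⁻ x in Set.Ioc (a + y) (a + y + T), F x := by
    simpa [add_right_comm] using
      (measurePreserving_add_right volume y).setLIntegral_comp_preimage_emb
        (measurableEmbedding_addRight y) F (Set.Ioc (a + y) (a + y + T))
  rw [htranslate]
  exact (isAddFundamentalDomain_Ioc hT (a + y)).setLIntegral_eq (isAddFundamentalDomain_Ioc hT a) F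
    hF.map_vadd_zmultiples

lemma aemeasurable_comp_add_right {β : Type*} [MeasurableSpace β] {f : ℝ → β}
    (hf : AEMeasurable f) (y : ℝ) : AEMeasurable (fun x => f (x + y)) :=
  hf.comp_quasiMeasurePreserving (measurePreserving_add_right volume y).quasiMeasurePreserving

theorem identDistrib_comp_add_right_of_periodic {β : Type*} [MeasurableSpace β] {f : ℝ → β}
    (hT : 0 < T) (hper : Function.Periodic f T) (hf : AEMeasurable f) (a y : ℝ) :
    ProbabilityTheory.IdentDistrib (fun x => f (x + y)) f
      (volume.restrict (Set.Ioc a (a + T))) (volume.restrict (Set.Ioc a (a + T))) where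
  aemeasurable_fst := (aemeasurable_comp_add_right hf y).restrict
  aemeasurable_snd := hf.restrict
  map_eq := by
    refine Measure.ext_of_lintegral _ fun F hF => ?_
    rw [lintegral_map' hF.aemeasurable (aemeasurable_comp_add_right hf y).restrict,
      lintegral_map' hF.aemeasurable hf.restrict]
    exact setLIntegral_Ioc_comp_add_right_of_periodic hT (hper.comp F) a y

variable {f : ℝ → ℝ} {a : ℝ}

lemma integrableOn_posLog_comp_add_right_of_periodic (hT : 0 < T) (hper : Function.Periodic f T)
    (hf : AEMeasurable f) (hpos : IntegrableOn (fun x => log⁺ (f x)) (Set.Ioc a (a + T)))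
    (y : ℝ) : IntegrableOn (fun x => log⁺ (f (x + y))) (Set.Ioc a (a + T)) :=
  ((identDistrib_comp_add_right_of_periodic hT hper hf a y).comp
    continuous_posLog.measurable).integrable_iff.2 hpos

lemma integrableOn_posLog_prod_translates (hT : 0 < T) (hper : Function.Periodic f T)
    (hf : AEMeasurable f) (hpos : IntegrableOn (fun x => log⁺ (f x)) (Set.Ioc a (a + T)))
    (α : ℝ) (n : ℕ) :
    IntegrableOn (fun x => log⁺ (∏ k ∈ Finset.range n, f (x + k * α))) (Set.Ioc a (a + T)) :=
  integrable_posLog_prod _ (fun k _ => (aemeasurable_comp_add_right hf (k * α)).restrict)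
    fun k _ => integrableOn_posLog_comp_add_right_of_periodic hT hper hf hpos (k * α)

theorem elogIntegral_prod_translates (hT : 0 < T) (hper : Function.Periodic f T)
    (hf : AEMeasurable f) (hpos : IntegrableOn (fun x => log⁺ (f x)) (Set.Ioc a (a + T)))
    (α : ℝ) (n : ℕ) :
    elogIntegral (volume.restrict (Set.Ioc a (a + T)))
        (fun x => ∏ k ∈ Finset.range n, f (x + k * α))
      = n • elogIntegral (volume.restrict (Set.Ioc a (a + T))) f := by
  rw [elogIntegral_prod (Finset.range n) (f := fun k x => f (x + k * α))
    (fun k _ => (aemeasurable_comp_add_right hf (k * α)).restrict)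
    fun k _ => integrableOn_posLog_comp_add_right_of_periodic hT hper hf hpos (k * α)]
  simp_rw [elogIntegral_eq_of_identDistrib
    (identDistrib_comp_add_right_of_periodic hT hper hf a _)]
  rw [Finset.sum_const, Finset.card_range]

theorem elogIntegral_prod_translates_mul_prod_translates {g : ℝ → ℝ} (hT : 0 < T)
    (hf_per : Function.Periodic f T) (hg_per : Function.Periodic g T)
    (hf : AEMeasurable f) (hg : AEMeasurable g)
    (hfpos : IntegrableOn (fun x => log⁺ (f x)) (Set.Ioc a (a + T)))
    (hgpos : IntegrableOn (fun x => log⁺ (g x)) (Set.Ioc a (a + T))) (α : ℝ) (m n : ℕ) :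
    elogIntegral (volume.restrict (Set.Ioc a (a + T)))
        (fun x => (∏ k ∈ Finset.range m, f (x + k * α)) * ∏ k ∈ Finset.range n, g (x + k * α))
      = m • elogIntegral (volume.restrict (Set.Ioc a (a + T))) f
        + n • elogIntegral (volume.restrict (Set.Ioc a (a + T))) g := by
  have hF : AEMeasurable (fun x => ∏ k ∈ Finset.range m, f (x + k * α)) :=
    Finset.aemeasurable_fun_prod _ fun k _ => aemeasurable_comp_add_right hf (k * α)
  have hG : AEMeasurable (fun x => ∏ k ∈ Finset.range n, g (x + k * α)) :=
    Finset.aemeasurable_fun_prod _ fun k _ => aemeasurable_comp_add_right hg (k * α)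
  rw [elogIntegral_mul hF.restrict hG.restrict
    (integrableOn_posLog_prod_translates hT hf_per hf hfpos α m)
    (integrableOn_posLog_prod_translates hT hg_per hg hgpos α n),
    elogIntegral_prod_translates hT hf_per hf hfpos α m,
    elogIntegral_prod_translates hT hg_per hg hgpos α n]

end Periodic

section Norm

open scoped Matrix.Norms.L2Operator

theorem singVal_one_eq_l2_opNorm {d : ℕ} [NeZero d] (M : Matrix (Fin d) (Fin d) ℂ) :
    singVal 1 M = ‖M‖ := by
  set S := {t : ℝ | ∃ V : Submodule ℂ (EuclideanSpace ℂ (Fin d)),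
    Module.finrank ℂ V = 1 ∧ ∀ v ∈ V, t * ‖v‖ ≤ ‖(Matrix.toEuclideanLin M) v‖}
  have hupper : ‖M‖ ∈ upperBounds S := by
    rintro t ⟨V, hV, hle⟩
    obtain ⟨w, hw, -⟩ := finrank_eq_one_iff'.1 hV
    have hw_pos : 0 < ‖(w : EuclideanSpace ℂ (Fin d))‖ := by simpa using hw
    exact le_of_mul_le_mul_right ((hle w w.2).trans (M.l2_opNorm_mulVec _)) hw_pos
  have hratio : ∀ w : EuclideanSpace ℂ (Fin d), w ≠ 0 →
      ‖Matrix.toEuclideanLin M w‖ / ‖w‖ ∈ S := by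
    refine fun w hw => ⟨ℂ ∙ w, finrank_span_singleton hw, fun v hv => le_of_eq ?_⟩
    obtain ⟨a, rfl⟩ := Submodule.mem_span_singleton.1 hv
    have hw_norm : ‖w‖ ≠ 0 := norm_ne_zero_iff.2 hw
    rw [map_smul, norm_smul, norm_smul]
    field_simp
  obtain ⟨w₀, hw₀⟩ := exists_ne (0 : EuclideanSpace ℂ (Fin d))
  refine le_antisymm (csSup_le ⟨_, hratio w₀ hw₀⟩ hupper) ?_
  rw [Matrix.l2_opNorm_def]
  refine ContinuousLinearMap.opNorm_le_bound _
    (Real.sSup_nonneg' ⟨_, hratio w₀ hw₀, by positivity⟩) fun w => ?_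
  rcases eq_or_ne w 0 with rfl | hw
  · simp
  · exact (div_le_iff₀ (norm_pos_iff.2 hw)).1 (le_csSup ⟨_, hupper⟩ (hratio w hw))

lemma l2_opNorm_vecMulVec_star {𝕜 m n : Type*} [RCLike 𝕜] [Fintype m] [Fintype n] [DecidableEq n]
    (u : m → 𝕜) (v : n → 𝕜) :
    ‖Matrix.vecMulVec u (star v)‖ = ‖WithLp.toLp 2 u‖ * ‖WithLp.toLp 2 v‖ := by
  have hrankOne := InnerProductSpace.symm_toEuclideanLin_rankOne (WithLp.toLp 2 u) (WithLp.toLp 2 v)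
  rw [← InnerProductSpace.norm_rankOne (𝕜 := 𝕜), Matrix.l2_opNorm_def, ← hrankOne,
    LinearEquiv.trans_apply, LinearEquiv.apply_symm_apply]
  rfl

end Norm

section StarDotProduct

variable {𝕜 ι : Type*} [RCLike 𝕜] [Fintype ι]

lemma norm_toLp_eq_one_of_sum_sq {u : ι → 𝕜} (hu : ∑ i, ‖u i‖ ^ 2 = 1) :
    ‖WithLp.toLp 2 u‖ = 1 := by
  simp [EuclideanSpace.norm_eq, hu]

lemma norm_star_dotProduct_le (u v : ι → 𝕜) :
    ‖star u ⬝ᵥ v‖ ≤ ‖WithLp.toLp 2 u‖ * ‖WithLp.toLp 2 v‖ := by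
  simpa [EuclideanSpace.inner_eq_star_dotProduct, dotProduct_comm] using
    norm_inner_le_norm (𝕜 := 𝕜) (WithLp.toLp 2 u) (WithLp.toLp 2 v)

lemma posLog_norm_star_dotProduct_eq_zero {u v : ι → 𝕜} (hu : ∑ i, ‖u i‖ ^ 2 = 1)
    (hv : ∑ i, ‖v i‖ ^ 2 = 1) : Real.posLog ‖star u ⬝ᵥ v‖ = 0 := by
  rw [Real.posLog_eq_zero_iff, abs_norm]
  simpa only [norm_toLp_eq_one_of_sum_sq hu, norm_toLp_eq_one_of_sum_sq hv, mul_one] using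
    norm_star_dotProduct_le u v

lemma aemeasurable_star_dotProduct {X : Type*} [MeasurableSpace X] {μ : Measure X}
    {u v : X → ι → 𝕜} (hu : AEMeasurable u μ) (hv : AEMeasurable v μ) :
    AEMeasurable (fun x => star (u x) ⬝ᵥ v x) μ :=
  Finset.aemeasurable_fun_sum _ fun i _ =>
    (continuous_star.measurable.comp_aemeasurable (aemeasurable_pi_iff.1 hu i)).mul
      (aemeasurable_pi_iff.1 hv i)

end StarDotProduct

section RankOneCocycle

variable {d : ℕ} {α : ℝ} {c : ℝ → ℂ} {φ ψ : ℝ → Fin d → ℂ} {A : ℝ → Matrix (Fin d) (Fin d) ℂ}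

theorem matIter_succ_of_rankOne
    (hA : ∀ x, A x = c x • Matrix.vecMulVec (φ x) (star (ψ x))) (n : ℕ) (x : ℝ) :
    matIter α A (n + 1) x =
      ((∏ k ∈ Finset.range (n + 1), c (x + k * α)) *
        ∏ k ∈ Finset.range n, star (ψ (x + k * α + α)) ⬝ᵥ φ (x + k * α)) •
        Matrix.vecMulVec (φ (x + n * α)) (star (ψ x)) := by
  induction n generalizing x with
  | zero => simp [matIter, hA]
  | succ n ih =>
    have hshift (k : ℕ) : x + α + k * α = x + (k + 1 : ℕ) * α := by push_cast; ring
    rw [matIter, ih, hA, Matrix.smul_mul, Matrix.mul_smul, Matrix.vecMulVec_mul_vecMulVec,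
      Matrix.vecMulVec_smul, smul_smul, smul_smul,
      Finset.prod_range_succ' (fun k : ℕ => c (x + k * α)) (n + 1),
      Finset.prod_range_succ' (fun k : ℕ => star (ψ (x + k * α + α)) ⬝ᵥ φ (x + k * α)) n]
    simp only [hshift, Nat.cast_zero, zero_mul, add_zero]
    congr 1
    ring

open scoped Matrix.Norms.L2Operator in
theorem singVal_one_matIter_succ_of_rankOne
    (hA : ∀ x, A x = c x • Matrix.vecMulVec (φ x) (star (ψ x)))
    (hφ : ∀ x, ∑ i, ‖φ x i‖ ^ 2 = 1) (hψ : ∀ x, ∑ i, ‖ψ x i‖ ^ 2 = 1) (n : ℕ) (x : ℝ) :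
    singVal 1 (matIter α A (n + 1) x) =
      (∏ k ∈ Finset.range (n + 1), ‖c (x + k * α)‖) *
        ∏ k ∈ Finset.range n, ‖star (ψ (x + k * α + α)) ⬝ᵥ φ (x + k * α)‖ := by
  have : NeZero d := ⟨by rintro rfl; simpa using hφ 0⟩
  rw [singVal_one_eq_l2_opNorm, matIter_succ_of_rankOne hA, norm_smul, l2_opNorm_vecMulVec_star,
    norm_toLp_eq_one_of_sum_sq (hφ _), norm_toLp_eq_one_of_sum_sq (hψ _), mul_one, mul_one,
    norm_mul, norm_prod, norm_prod]

end RankOneCocycle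

lemma tendsto_inv_mul_succ_nsmul_add_nsmul {C H : EReal} (hC : C ≠ ⊤) (hH : H ≠ ⊤) :
    Tendsto (fun n : ℕ => ((((n + 1 : ℕ) : ℝ)⁻¹ : ℝ) : EReal) * ((n + 1) • C + n • H))
      atTop (𝓝 (C + H)) := by
  have hsplit (n : ℕ) : ((((n + 1 : ℕ) : ℝ)⁻¹ : ℝ) : EReal) * ((n + 1) • C + n • H)
      = C + (((n : ℝ) / (n + 1) : ℝ) : EReal) * H := by
    have hone : (((n + 1 : ℕ) : ℝ)⁻¹) * ((n + 1 : ℕ) : ℝ) = 1 := by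
      rw [inv_mul_cancel₀ (by positivity)]
    have hdiv : (((n + 1 : ℕ) : ℝ)⁻¹) * (n : ℝ) = n / (n + 1) := by
      push_cast
      ring
    rw [EReal.left_distrib_of_nonneg_of_ne_top (EReal.coe_nonneg.2 (by positivity))
      (EReal.coe_ne_top _), EReal.nsmul_eq_mul, EReal.nsmul_eq_mul, ← mul_assoc, ← mul_assoc,
      ← EReal.coe_coe_eq_natCast, ← EReal.coe_coe_eq_natCast, ← EReal.coe_mul, ← EReal.coe_mul,
      hone, hdiv, EReal.coe_one, one_mul]
  have hratio : Tendsto (fun n : ℕ => (((n : ℝ) / (n + 1) : ℝ) : EReal)) atTop (𝓝 1) :=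
    EReal.tendsto_coe.2 (tendsto_natCast_div_add_atTop 1)
  have hmul := EReal.Tendsto.mul hratio (tendsto_const_nhds (x := H)) (.inl one_ne_zero)
    (.inl one_ne_zero) (.inl (EReal.coe_ne_bot 1)) (.inl (EReal.coe_ne_top 1))
  rw [one_mul] at hmul
  simp_rw [hsplit]
  exact (EReal.continuousAt_add (p := (C, H)) (.inl hC) (.inr hH)).tendsto.comp
    (tendsto_const_nhds.prodMk_nhds hmul)

theorem hasLyapunovExp_of_singVal_eq_prod_translates {d : ℕ} {α : ℝ}
    {A : ℝ → Matrix (Fin d) (Fin d) ℂ} {j : ℕ} {f g : ℝ → ℝ}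
    (hf_per : Function.Periodic f 1) (hg_per : Function.Periodic g 1)
    (hf : AEMeasurable f) (hg : AEMeasurable g)
    (hfpos : IntegrableOn (fun x => Real.posLog (f x)) (Set.Ioc 0 1))
    (hgpos : IntegrableOn (fun x => Real.posLog (g x)) (Set.Ioc 0 1))
    (hA : ∀ n x, singVal j (matIter α A (n + 1) x) =
      (∏ k ∈ Finset.range (n + 1), f (x + k * α)) * ∏ k ∈ Finset.range n, g (x + k * α)) :
    HasLyapunovExp α A j
      (elogIntegral (volume.restrict (Set.Ioc (0 : ℝ) 1)) f
        + elogIntegral (volume.restrict (Set.Ioc (0 : ℝ) 1)) g) := by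
  rw [HasLyapunovExp, ← tendsto_add_atTop_iff_nat 1, ← zero_add (1 : ℝ)]
  rw [← zero_add (1 : ℝ)] at hfpos hgpos
  simp_rw [hA, elogIntegral_prod_translates_mul_prod_translates one_pos hf_per hg_per hf hg
    hfpos hgpos]
  exact tendsto_inv_mul_succ_nsmul_add_nsmul (elogIntegral_ne_top hf.restrict hfpos)
    (elogIntegral_ne_top hg.restrict hgpos)

theorem stmt_19_general {d : ℕ} (α : ℝ) (c : ℝ → ℂ) (φ ψ : ℝ → Fin d → ℂ)
    (hc_per : Function.Periodic c 1) (hc : AEMeasurable c)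
    (hc_pos : IntegrableOn (fun x => Real.posLog ‖c x‖) (Set.Ioc 0 1))
    (hφ_per : Function.Periodic φ 1) (hφ : AEMeasurable φ)
    (hψ_per : Function.Periodic ψ 1) (hψ : AEMeasurable ψ)
    (hφ_norm : ∀ x, ∑ i, ‖φ x i‖ ^ 2 = 1) (hψ_norm : ∀ x, ∑ i, ‖ψ x i‖ ^ 2 = 1)
    (A : ℝ → Matrix (Fin d) (Fin d) ℂ)
    (hA : ∀ x, A x = c x • Matrix.vecMulVec (φ x) (star (ψ x))) :
    HasLyapunovExp α A 1
      (elogIntegral (volume.restrict (Set.Ioc (0:ℝ) 1)) (fun x => ‖c x‖)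
        + elogIntegral (volume.restrict (Set.Ioc (0:ℝ) 1))
            (fun x => ‖star (ψ (x + α)) ⬝ᵥ φ x‖)) ∧
    (HasLyapunovExp α A 1 ⊥ →
      elogIntegral (volume.restrict (Set.Ioc (0:ℝ) 1)) (fun x => ‖c x‖) ≠ ⊥ →
      elogIntegral (volume.restrict (Set.Ioc (0:ℝ) 1))
        (fun x => ‖star (ψ (x + α)) ⬝ᵥ φ x‖) = ⊥) := by
  have hh := (aemeasurable_star_dotProduct (aemeasurable_comp_add_right hψ α) hφ).norm
  have hh_per : Function.Periodic (fun x => ‖star (ψ (x + α)) ⬝ᵥ φ x‖) 1 := fun x => by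
    simp only [add_right_comm x 1 α, hψ_per (x + α), hφ_per x]
  have hh_pos : IntegrableOn (fun x => Real.posLog ‖star (ψ (x + α)) ⬝ᵥ φ x‖) (Set.Ioc 0 1) := by
    simp [posLog_norm_star_dotProduct_eq_zero (hψ_norm _) (hφ_norm _)]
  have hLyap := hasLyapunovExp_of_singVal_eq_prod_translates (hc_per.comp norm) hh_per hc.norm hh
    hc_pos hh_pos (singVal_one_matIter_succ_of_rankOne hA hφ_norm hψ_norm)
  refine ⟨hLyap, fun hbot hc_ne_bot => ?_⟩
  exact (EReal.add_eq_bot_iff.1 (tendsto_nhds_unique hLyap hbot)).resolve_left hc_ne_bot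

/-- For the rank-at-most-one analytic 1-periodic cocycle
`A(x) = c(x) φ(x) ψ(x)*` with `‖φ(x)‖ = ‖ψ(x)‖ = 1` and `c` not identically zero, the top
Lyapunov exponent satisfies, as an identity in `[-∞,∞)`,
`L₁(α,A) = ∫₀¹ ln|c| + ∫₀¹ ln|ψ(x+α)*φ(x)| dx`.
In particular if `L₁(α,A) = -∞` and `∫₀¹ ln|c| > -∞` then `∫₀¹ ln|ψ(x+α)*φ(x)| dx = -∞`. -/
theorem stmt_19 {d : ℕ} (α : ℝ) (c : ℝ → ℂ) (φ ψ : ℝ → Fin d → ℂ)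
    (hc_per : Function.Periodic c 1) (hc_an : ∀ x : ℝ, AnalyticAt ℝ c x)
    (hφ_per : Function.Periodic φ 1) (hφ_an : ∀ (x : ℝ) (i : Fin d), AnalyticAt ℝ (fun t => φ t i) x)
    (hψ_per : Function.Periodic ψ 1) (hψ_an : ∀ (x : ℝ) (i : Fin d), AnalyticAt ℝ (fun t => ψ t i) x)
    (hφ_norm : ∀ x : ℝ, ∑ i, ‖φ x i‖ ^ 2 = 1)
    (hψ_norm : ∀ x : ℝ, ∑ i, ‖ψ x i‖ ^ 2 = 1)
    (hc_ne : ∃ x : ℝ, c x ≠ 0)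
    (A : ℝ → Matrix (Fin d) (Fin d) ℂ)
    (hA : ∀ x : ℝ, A x = c x • Matrix.vecMulVec (φ x) (star (ψ x))) :
    HasLyapunovExp α A 1
      (elogIntegral (volume.restrict (Set.Ioc (0:ℝ) 1)) (fun x => ‖c x‖)
        + elogIntegral (volume.restrict (Set.Ioc (0:ℝ) 1))
            (fun x => ‖∑ i, (starRingEnd ℂ) (ψ (x + α) i) * φ x i‖)) ∧
    (HasLyapunovExp α A 1 ⊥ →
      elogIntegral (volume.restrict (Set.Ioc (0:ℝ) 1)) (fun x => ‖c x‖) ≠ ⊥ →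
      elogIntegral (volume.restrict (Set.Ioc (0:ℝ) 1))
        (fun x => ‖∑ i, (starRingEnd ℂ) (ψ (x + α) i) * φ x i‖) = ⊥) := by
  have hc := continuous_iff_continuousAt.2 fun x => (hc_an x).continuousAt
  have hφ := continuous_pi fun i => continuous_iff_continuousAt.2 fun x => (hφ_an x i).continuousAt
  have hψ := continuous_pi fun i => continuous_iff_continuousAt.2 fun x => (hψ_an x i).continuousAt
  exact stmt_19_general α c φ ψ hc_per hc.aemeasurable
    (Real.continuous_posLog.comp hc.norm).integrableOn_Ioc
    hφ_per hφ.aemeasurable hψ_per hψ.aemeasurable hφ_norm hψ_norm A hA
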